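/- arXiv:1303.0417 — 4 statements merged into one kernel-verified Lean document; each statement's English description precedes it below -/
import Mathlib

section
/- If 1 ≤ p ≤ 2, then Φ is strictly convex on ℝ^d. -/
open scoped ContDiff RealInnerProductSpace
open Filter

/-!
For `p = 1` each summand is a multiple of `g ‖x - a j‖` with `g t = √(t ^ 2 + ε)`, which is strictly
convex by the strict Cauchy–Schwarz inequality for `(s, √ε)` and `(t, √ε)`, and increasing on
`[0, ∞)`. Composing `g` with the norm keeps strict convexity: points of different norms are handled
by the strict convexity of `g`, distinct points of equal norm by the strict convexity of the ball.
For larger `p`, apply the increasing convex function `t ↦ t ^ p` to `g ‖x - a j‖`.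
-/

open Set

section Operations

variable {𝕜 E β ι : Type*} [PartialOrder 𝕜] [AddCommMonoid E] [SMul 𝕜 E]
  [AddCommMonoid β] [PartialOrder β] {t : Set E}

lemma strictConvexOn_const_smul [CommSemiring 𝕜] [Module 𝕜 β] [PosSMulStrictMono 𝕜 β]
    {f : E → β} {c : 𝕜} (hc : 0 < c) (hf : StrictConvexOn 𝕜 t f) :
    StrictConvexOn 𝕜 t fun x ↦ c • f x :=
  ⟨hf.1, fun x hx y hy hxy a b ha hb hab ↦
    calc
      c • f (a • x + b • y) < c • (a • f x + b • f y) :=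
        smul_lt_smul_of_pos_left (hf.2 hx hy hxy ha hb hab) hc
      _ = a • c • f x + b • c • f y := by rw [smul_add, smul_comm c, smul_comm c]⟩

lemma strictConvexOn_finset_sum [Semiring 𝕜] [IsOrderedCancelAddMonoid β] [DistribMulAction 𝕜 β]
    {s : Finset ι} (hs : s.Nonempty) {f : ι → E → β} (hf : ∀ i ∈ s, StrictConvexOn 𝕜 t (f i)) :
    StrictConvexOn 𝕜 t fun x ↦ ∑ i ∈ s, f i x := by
  induction hs using Finset.Nonempty.cons_induction with
  | singleton i => simpa only [Finset.sum_singleton] using hf i (Finset.mem_singleton_self i)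
  | cons i s hi _ ih =>
    simp only [Finset.sum_cons]
    exact (hf i (Finset.mem_cons_self i s)).add (ih fun j hj ↦ hf j (Finset.mem_cons_of_mem hj))

end Operations

section SqrtSqAdd

variable {ε : ℝ}

lemma mul_add_lt_sqrt_mul_sqrt (hε : 0 < ε) {x y : ℝ} (hxy : x ≠ y) :
    x * y + ε < √(x ^ 2 + ε) * √(y ^ 2 + ε) := by
  have hgap : 0 < ε * (x - y) ^ 2 := mul_pos hε (sq_pos_of_ne_zero (sub_ne_zero.2 hxy))
  rw [← Real.sqrt_mul (by positivity)]
  apply Real.lt_sqrt_of_sq_lt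
  linear_combination hgap

lemma strictConvexOn_sqrt_sq_add (hε : 0 < ε) :
    StrictConvexOn ℝ univ fun x : ℝ ↦ √(x ^ 2 + ε) := by
  refine ⟨convex_univ, fun x _ y _ hxy a b ha hb hab ↦ ?_⟩
  have hx : √(x ^ 2 + ε) ^ 2 = x ^ 2 + ε := Real.sq_sqrt (by positivity)
  have hy : √(y ^ 2 + ε) ^ 2 = y ^ 2 + ε := Real.sq_sqrt (by positivity)
  simp only [smul_eq_mul]
  rw [Real.sqrt_lt' (by positivity)]
  calc (a * x + b * y) ^ 2 + ε
      = a ^ 2 * (x ^ 2 + ε) + 2 * (a * b) * (x * y + ε) + b ^ 2 * (y ^ 2 + ε) := by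
        linear_combination -ε * (a + b + 1) * hab
    _ < a ^ 2 * (x ^ 2 + ε) + 2 * (a * b) * (√(x ^ 2 + ε) * √(y ^ 2 + ε))
          + b ^ 2 * (y ^ 2 + ε) := by
        gcongr
        exact mul_add_lt_sqrt_mul_sqrt hε hxy
    _ = (a * √(x ^ 2 + ε) + b * √(y ^ 2 + ε)) ^ 2 := by
        linear_combination -a ^ 2 * hx - b ^ 2 * hy

lemma strictMonoOn_sqrt_sq_add (hε : 0 ≤ ε) :
    StrictMonoOn (fun x : ℝ ↦ √(x ^ 2 + ε)) (Ici 0) := by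
  intro x (hx : 0 ≤ x) y _ hxy
  exact Real.sqrt_lt_sqrt (by positivity) (by gcongr)

end SqrtSqAdd

section StrictConvexSpace

variable {E : Type*} [NormedAddCommGroup E] [NormedSpace ℝ E] [StrictConvexSpace ℝ E]

lemma strictConvexOn_comp_norm {g : ℝ → ℝ} (hg : StrictConvexOn ℝ (Ici 0) g)
    (hg_mono : StrictMonoOn g (Ici 0)) : StrictConvexOn ℝ univ fun x : E ↦ g ‖x‖ := by
  refine ⟨convex_univ, fun x _ y _ hxy a b ha hb hab ↦ ?_⟩
  have hnorm (z : E) : ‖z‖ ∈ Ici (0 : ℝ) := norm_nonneg z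
  obtain heq | hne := eq_or_ne ‖x‖ ‖y‖
  · calc g ‖a • x + b • y‖ < g ‖x‖ :=
          hg_mono (hnorm _) (hnorm x) (norm_combo_lt_of_ne le_rfl heq.ge hxy ha hb hab)
      _ = a • g ‖x‖ + b • g ‖y‖ := by rw [← heq, Convex.combo_self hab]
  · have hle : ‖a • x + b • y‖ ≤ a • ‖x‖ + b • ‖y‖ :=
      convexOn_univ_norm.2 (mem_univ x) (mem_univ y) ha.le hb.le hab
    calc g ‖a • x + b • y‖ ≤ g (a • ‖x‖ + b • ‖y‖) :=
          hg_mono.monotoneOn (hnorm _) ((hnorm _).trans hle) hle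
      _ < a • g ‖x‖ + b • g ‖y‖ := hg.2 (hnorm x) (hnorm y) hne ha hb hab

lemma strictConvexOn_norm_sq_add_rpow {ε p : ℝ} (hε : 0 < ε) (hp : 1 ≤ p) :
    StrictConvexOn ℝ univ fun x : E ↦ (‖x‖ ^ 2 + ε) ^ (p / 2) := by
  have hsqrt : StrictConvexOn ℝ univ fun x : E ↦ √(‖x‖ ^ 2 + ε) :=
    strictConvexOn_comp_norm ((strictConvexOn_sqrt_sq_add hε).subset (subset_univ _) (convex_Ici 0))
      (strictMonoOn_sqrt_sq_add hε.le)
  have hpow (x : E) : (‖x‖ ^ 2 + ε) ^ (p / 2) = √(‖x‖ ^ 2 + ε) ^ p :=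
    Real.rpow_div_two_eq_sqrt p (by positivity)
  simp only [hpow]
  refine ⟨convex_univ, fun x hx y hy hxy a b ha hb hab ↦ ?_⟩
  calc √(‖a • x + b • y‖ ^ 2 + ε) ^ p
      < (a • √(‖x‖ ^ 2 + ε) + b • √(‖y‖ ^ 2 + ε)) ^ p :=
        Real.rpow_lt_rpow (Real.sqrt_nonneg _) (hsqrt.2 hx hy hxy ha hb hab) (by linarith)
    _ ≤ a • √(‖x‖ ^ 2 + ε) ^ p + b • √(‖y‖ ^ 2 + ε) ^ p :=
        (convexOn_rpow hp).2 (Real.sqrt_nonneg _) (Real.sqrt_nonneg _) ha.le hb.le hab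

theorem stmt_3_general {ι : Type*} {s : Finset ι} (hs : s.Nonempty) (a : ι → E)
    {w : ι → ℝ} (hw : ∀ j ∈ s, 0 < w j) {ε p : ℝ} (hε : 0 < ε) (hp : 1 ≤ p) :
    StrictConvexOn ℝ univ fun x ↦ ∑ j ∈ s, w j * (‖x - a j‖ ^ 2 + ε) ^ (p / 2) := by
  refine strictConvexOn_finset_sum hs fun j hj ↦ strictConvexOn_const_smul (hw j hj) ?_
  simpa only [preimage_univ, Function.comp_def, ← sub_eq_add_neg] using
    (strictConvexOn_norm_sq_add_rpow (E := E) hε hp).translate_left (-a j)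

end StrictConvexSpace

theorem stmt_3
    (d n : ℕ) (hd : 1 ≤ d) (hn : 1 ≤ n)
    (a : Fin n → EuclideanSpace ℝ (Fin d))
    (w : Fin n → ℝ) (hw : ∀ j, 0 < w j)
    (ε : ℝ) (hε : 0 < ε)
    (p : ℝ) (hp0 : 0 < p) (hp2 : p ≤ 2)
    (Φ : EuclideanSpace ℝ (Fin d) → ℝ)
    (hΦ : ∀ x, Φ x = ∑ j, w j * (‖x - a j‖ ^ 2 + ε) ^ (p / 2))
    (hp1 : 1 ≤ p) :
    StrictConvexOn ℝ Set.univ Φ := by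
  rw [funext hΦ]
  exact stmt_3_general ⟨⟨0, hn⟩, Finset.mem_univ _⟩ a (fun j _ ↦ hw j) hε hp1
end

section
/- For every y ∈ ℝ^d and every x ∈ ℝ^d, Φ(x) ≤ Ψ_y(x), where Ψ_y(x) = Φ(y) + ⟨x − y, ∇Φ(y)⟩ + (p/2) (Σ_{j=1}^n μ_j(y)) ‖x − y‖² and μ_j(y) = w_j (‖y − a_j‖² + ε)^{p/2 − 1}. Moreover Ψ_y(y) = Φ(y). -/
open scoped ContDiff RealInnerProductSpace
open Filter

/-!
A concave function lies below its tangent lines. Composing this tangent bound with the quadratic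
`x ↦ ‖x - b‖ ^ 2` and expanding the square around `y` shows that a concave function of the squared
distance to `b` is bounded by its first-order expansion at `y` plus a multiple of `‖x - y‖ ^ 2`,
where the multiple is the derivative of the concave function. Such bounds add up with nonnegative
weights, and `t ↦ (t + ε) ^ (p / 2)` is concave because `p ≤ 2`.
-/

open Set

theorem le_add_mul_sub_of_concaveOn {S : Set ℝ} {φ : ℝ → ℝ} {m u v : ℝ} (hφ : ConcaveOn ℝ S φ)
    (hm : HasDerivWithinAt φ m S v) (hu : u ∈ S) (hv : v ∈ S) : φ u ≤ φ v + m * (u - v) := by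
  rcases lt_trichotomy u v with huv | rfl | hvu
  · have hslope := hφ.le_slope_of_hasDerivWithinAt hu hv huv hm
    rw [slope_def_field, le_div_iff₀ (sub_pos.2 huv)] at hslope
    linarith
  · simp
  · have hslope := hφ.slope_le_of_hasDerivWithinAt hv hu hvu hm
    rw [slope_def_field, div_le_iff₀ (sub_pos.2 hvu)] at hslope
    linarith

theorem concaveOn_add_const_rpow {ε q : ℝ} (hε : 0 ≤ ε) (hq₀ : 0 ≤ q) (hq₁ : q ≤ 1) :
    ConcaveOn ℝ (Ici 0) fun t : ℝ ↦ (t + ε) ^ q :=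
  ((Real.concaveOn_rpow hq₀ hq₁).translate_left ε).subset
    (fun _ ht ↦ add_nonneg hε ht) (convex_Ici 0)

section QuadraticUpperBound

variable {E : Type*} [NormedAddCommGroup E] [InnerProductSpace ℝ E]

/-- `f` lies below the quadratic model with value `f y`, slope `g` and curvature `c` at `y`: the
upper bound on which majorization-minimization schemes rest. The curvature is normalized without
the factor `1 / 2`, and `g` is not required to be the gradient of `f`. -/
def HasQuadraticUpperBoundAt (f : E → ℝ) (g : E) (c : ℝ) (y : E) : Prop :=
  ∀ x, f x ≤ f y + ⟪x - y, g⟫ + c * ‖x - y‖ ^ 2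

theorem HasQuadraticUpperBoundAt.sum_mul {ι : Type*} {s : Finset ι} {w c : ι → ℝ}
    {f : ι → E → ℝ} {g : ι → E} {y : E} (hw : ∀ j ∈ s, 0 ≤ w j)
    (hf : ∀ j ∈ s, HasQuadraticUpperBoundAt (f j) (g j) (c j) y) :
    HasQuadraticUpperBoundAt (fun x ↦ ∑ j ∈ s, w j * f j x) (∑ j ∈ s, w j • g j)
      (∑ j ∈ s, w j * c j) y := by
  intro x
  calc ∑ j ∈ s, w j * f j x
      ≤ ∑ j ∈ s, w j * (f j y + ⟪x - y, g j⟫ + c j * ‖x - y‖ ^ 2) :=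
        Finset.sum_le_sum fun j hj ↦ mul_le_mul_of_nonneg_left (hf j hj x) (hw j hj)
    _ = ∑ j ∈ s, w j * f j y + ⟪x - y, ∑ j ∈ s, w j • g j⟫
          + (∑ j ∈ s, w j * c j) * ‖x - y‖ ^ 2 := by
        simp only [inner_sum, inner_smul_right, Finset.sum_mul, mul_add, Finset.sum_add_distrib,
          mul_assoc]

theorem hasQuadraticUpperBoundAt_comp_norm_sub_sq {φ : ℝ → ℝ} {m : ℝ} {b y : E}
    (hφ : ConcaveOn ℝ (Ici 0) φ) (hm : HasDerivWithinAt φ m (Ici 0) (‖y - b‖ ^ 2)) :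
    HasQuadraticUpperBoundAt (fun x ↦ φ (‖x - b‖ ^ 2)) ((2 * m) • (y - b)) m y := by
  intro x
  have hexpand : ‖x - b‖ ^ 2 = ‖x - y‖ ^ 2 + 2 * ⟪x - y, y - b⟫ + ‖y - b‖ ^ 2 := by
    rw [← norm_add_sq_real, sub_add_sub_cancel]
  calc φ (‖x - b‖ ^ 2)
      ≤ φ (‖y - b‖ ^ 2) + m * (‖x - b‖ ^ 2 - ‖y - b‖ ^ 2) :=
        le_add_mul_sub_of_concaveOn hφ hm (mem_Ici.2 (sq_nonneg _)) (mem_Ici.2 (sq_nonneg _))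
    _ = φ (‖y - b‖ ^ 2) + ⟪x - y, (2 * m) • (y - b)⟫ + m * ‖x - y‖ ^ 2 := by
        rw [hexpand, inner_smul_right]
        ring

end QuadraticUpperBound

section Gradient

variable {E : Type*} [NormedAddCommGroup E] [InnerProductSpace ℝ E] [CompleteSpace E]

theorem hasGradientAt_sum_mul {ι : Type*} {s : Finset ι} {w : ι → ℝ} {f : ι → E → ℝ} {g : ι → E}
    {y : E} (hf : ∀ j ∈ s, HasGradientAt (f j) (g j) y) :
    HasGradientAt (fun x ↦ ∑ j ∈ s, w j * f j x) (∑ j ∈ s, w j • g j) y := by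
  rw [hasGradientAt_iff_hasFDerivAt, map_sum]
  simp only [map_smul]
  exact HasFDerivAt.fun_sum fun j hj ↦ (hf j hj).hasFDerivAt.const_mul (w j)

theorem hasGradientAt_comp_norm_sub_sq {φ : ℝ → ℝ} {m : ℝ} {b y : E}
    (hm : HasDerivWithinAt φ m (Ici 0) (‖y - b‖ ^ 2)) :
    HasGradientAt (fun x ↦ φ (‖x - b‖ ^ 2)) ((2 * m) • (y - b)) y := by
  have hsq : HasFDerivAt (fun x ↦ ‖x - b‖ ^ 2) (2 • innerSL ℝ (y - b)) y := by
    simpa using ((hasFDerivAt_id y).sub_const b).norm_sq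
  have hdual : InnerProductSpace.toDual ℝ E ((2 * m) • (y - b)) = m • 2 • innerSL ℝ (y - b) := by
    ext v
    simp only [map_smul, InnerProductSpace.toDual_apply_apply, smul_apply, innerSL_apply_apply,
      smul_eq_mul, nsmul_eq_mul, Nat.cast_ofNat]
    ring
  rw [hasGradientAt_iff_hasFDerivAt, hdual]
  exact hm.comp_hasFDerivAt y hsq (.of_forall fun x ↦ mem_Ici.2 (sq_nonneg ‖x - b‖))

theorem stmt_7_general {ι : Type*} [Fintype ι] {a : ι → E} {w : ι → ℝ} (hw : ∀ j, 0 ≤ w j)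
    {ε p : ℝ} (hε : 0 ≤ ε) (hp₀ : 0 ≤ p) (hp₂ : p ≤ 2) {Φ : E → ℝ}
    (hΦ : ∀ x, Φ x = ∑ j, w j * (‖x - a j‖ ^ 2 + ε) ^ (p / 2))
    {y : E} (hy : ∀ j, ‖y - a j‖ ^ 2 + ε ≠ 0) (x : E) :
    Φ x ≤ Φ y + ⟪x - y, gradient Φ y⟫ +
        p / 2 * (∑ j, w j * (‖y - a j‖ ^ 2 + ε) ^ (p / 2 - 1)) * ‖x - y‖ ^ 2 ∧
      Φ y = Φ y + ⟪y - y, gradient Φ y⟫ +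
        p / 2 * (∑ j, w j * (‖y - a j‖ ^ 2 + ε) ^ (p / 2 - 1)) * ‖y - y‖ ^ 2 := by
  obtain rfl := funext hΦ
  have hconcave : ConcaveOn ℝ (Ici 0) fun t : ℝ ↦ (t + ε) ^ (p / 2) :=
    concaveOn_add_const_rpow hε (by linarith) (by linarith)
  have hderiv (j : ι) : HasDerivWithinAt (fun t ↦ (t + ε) ^ (p / 2))
      (p / 2 * (‖y - a j‖ ^ 2 + ε) ^ (p / 2 - 1)) (Ici 0) (‖y - a j‖ ^ 2) := by
    simpa using (((hasDerivAt_id _).add_const ε).rpow_const (.inl (hy j))).hasDerivWithinAt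
  have hgrad := hasGradientAt_sum_mul (w := w) (s := Finset.univ)
    fun j _ ↦ hasGradientAt_comp_norm_sub_sq (hderiv j)
  have hbound := HasQuadraticUpperBoundAt.sum_mul (s := Finset.univ) (fun j _ ↦ hw j)
    (fun j _ ↦ hasQuadraticUpperBoundAt_comp_norm_sub_sq hconcave (hderiv j)) x
  refine ⟨?_, by simp⟩
  rw [hgrad.gradient, Finset.mul_sum]
  simpa only [mul_left_comm (p / 2)] using hbound

end Gradient

theorem stmt_7
    (d n : ℕ) (hd : 1 ≤ d) (hn : 1 ≤ n)
    (a : Fin n → EuclideanSpace ℝ (Fin d))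
    (w : Fin n → ℝ) (hw : ∀ j, 0 < w j)
    (ε : ℝ) (hε : 0 < ε)
    (p : ℝ) (hp0 : 0 < p) (hp2 : p ≤ 2)
    (Φ : EuclideanSpace ℝ (Fin d) → ℝ)
    (hΦ : ∀ x, Φ x = ∑ j, w j * (‖x - a j‖ ^ 2 + ε) ^ (p / 2)) :
    ∀ y x,
      Φ x ≤ Φ y + ⟪x - y, gradient Φ y⟫ +
        p / 2 * (∑ j, w j * (‖y - a j‖ ^ 2 + ε) ^ (p / 2 - 1)) * ‖x - y‖ ^ 2 ∧
      Φ y = Φ y + ⟪y - y, gradient Φ y⟫ +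
        p / 2 * (∑ j, w j * (‖y - a j‖ ^ 2 + ε) ^ (p / 2 - 1)) * ‖y - y‖ ^ 2 :=
  fun _ x ↦ stmt_7_general (fun j ↦ (hw j).le) hε.le hp0.le hp2 hΦ (fun _ ↦ by positivity) x
end

section
/- For every y ∈ ℝ^d, the quadratic majorizer Ψ_y(x) = Φ(y) + ⟨x − y, ∇Φ(y)⟩ + (p/2) (Σ_{j=1}^n μ_j(y)) ‖x − y‖², with μ_j(y) = w_j (‖y − a_j‖² + ε)^{p/2 − 1}, has the IRLS update T(y) = (Σ_{j=1}^n μ_j(y) a_j) / (Σ_{j=1}^n μ_j(y)) as its unique global minimizer over ℝ^d. -/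
open scoped ContDiff RealInnerProductSpace
open Filter

/-!
For `c ≠ 0`, completing the square shows that the quadratic model
`v ↦ f y + ⟪v - y, ∇ f y⟫ + c * ‖v - y‖ ^ 2` exceeds its value at the gradient step
`y - (2 * c)⁻¹ • ∇ f y` by exactly `c` times the squared distance to that step. For the IRLS
objective `∇ Φ y = p • ∑ j, μ j • (y - a j)`, so with `c = p / 2 * ∑ j, μ j` the gradient step is
the weighted mean of the points `a j`, which is the IRLS update.
-/

section QuadraticModel

variable {E : Type*} [NormedAddCommGroup E] [InnerProductSpace ℝ E] [CompleteSpace E]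

/-- The second-order model of `f` at `y` with isotropic curvature. The coefficient of the square is
`c` rather than `c / 2`, so the Hessian is `2 * c` times the identity. -/
noncomputable def quadraticModel (f : E → ℝ) (c : ℝ) (y v : E) : ℝ :=
  f y + ⟪v - y, gradient f y⟫ + c * ‖v - y‖ ^ 2

/-- The minimizer of `quadraticModel f c y` for `c > 0`: a step of gradient descent for `f` from `y`
with step size `1 / (2 * c)`. -/
noncomputable def gradientStep (f : E → ℝ) (c : ℝ) (y : E) : E :=
  y - (2 * c)⁻¹ • gradient f y

theorem quadraticModel_eq_add_mul_norm_sub_gradientStep_sq (f : E → ℝ) {c : ℝ} (hc : c ≠ 0)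
    (y v : E) :
    quadraticModel f c y v =
      quadraticModel f c y (gradientStep f c y) + c * ‖v - gradientStep f c y‖ ^ 2 := by
  have hgrad : gradient f y = (2 * c) • (y - gradientStep f c y) := by
    rw [gradientStep, sub_sub_cancel, smul_inv_smul₀ (mul_ne_zero two_ne_zero hc)]
  have hsplit : v - y = (v - gradientStep f c y) + (gradientStep f c y - y) := by abel
  rw [quadraticModel, quadraticModel, hgrad, hsplit, norm_add_sq_real, inner_add_left,
    ← neg_sub (gradientStep f c y) y, smul_neg, inner_neg_right, inner_smul_right]
  ring

theorem quadraticModel_gradientStep_lt (f : E → ℝ) {c : ℝ} (hc : 0 < c) {y z : E}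
    (hz : z ≠ gradientStep f c y) :
    quadraticModel f c y (gradientStep f c y) < quadraticModel f c y z := by
  have hdist : 0 < ‖z - gradientStep f c y‖ := norm_sub_pos_iff.mpr hz
  rw [quadraticModel_eq_add_mul_norm_sub_gradientStep_sq f hc.ne' y z]
  exact lt_add_of_pos_right _ (by positivity)

end QuadraticModel

section WeightedMean

variable {𝕜 E ι : Type*} [Field 𝕜] [AddCommGroup E] [Module 𝕜 E]

theorem sum_smul_sub_eq_sum_smul_sub_centerMass (s : Finset ι) {μ : ι → 𝕜}
    (hμ : ∑ j ∈ s, μ j ≠ 0) (a : ι → E) (y : E) :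
    ∑ j ∈ s, μ j • (y - a j) = (∑ j ∈ s, μ j) • (y - s.centerMass μ a) := by
  simp only [Finset.centerMass, smul_sub, Finset.sum_sub_distrib, smul_inv_smul₀ hμ,
    Finset.sum_smul]

end WeightedMean

section Gradient

variable {E : Type*} [NormedAddCommGroup E] [InnerProductSpace ℝ E] [CompleteSpace E]

theorem hasGradientAt_sum_const_mul {ι : Type*} {s : Finset ι} {f : ι → E → ℝ} {f' : ι → E}
    {y : E} (w : ι → ℝ) (hf : ∀ j ∈ s, HasGradientAt (f j) (f' j) y) :
    HasGradientAt (fun x => ∑ j ∈ s, w j * f j x) (∑ j ∈ s, w j • f' j) y := by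
  rw [hasGradientAt_iff_hasFDerivAt]
  simpa only [map_sum, map_smulₛₗ, conj_trivial] using
    HasFDerivAt.fun_sum fun j hj => (hf j hj).hasFDerivAt.const_mul (w j)

theorem hasGradientAt_norm_sub_sq_add_rpow {a y : E} {ε q : ℝ}
    (h : ‖y - a‖ ^ 2 + ε ≠ 0 ∨ 1 ≤ q) :
    HasGradientAt (fun x => (‖x - a‖ ^ 2 + ε) ^ q)
      ((2 * q * (‖y - a‖ ^ 2 + ε) ^ (q - 1)) • (y - a)) y := by
  have hderiv := (((hasFDerivAt_id y).sub_const a).norm_sq.add_const ε).rpow_const h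
  refine hasGradientAt_iff_hasFDerivAt.mpr (hderiv.congr_fderiv ?_)
  ext v
  simp only [id_eq, ContinuousLinearMap.comp_id, smul_apply, coe_innerSL_apply,
    nsmul_eq_mul, Nat.cast_ofNat, smul_eq_mul, map_smul, InnerProductSpace.toDual_apply_apply]
  ring

end Gradient

section IRLS

variable {E ι : Type*} [NormedAddCommGroup E]

/-- The weight `μ_j(y)` that iteratively reweighted least squares (IRLS) gives to the point `a j`
at the iterate `y`. -/
noncomputable def irlsWeight (a : ι → E) (w : ι → ℝ) (ε p : ℝ) (y : E) (j : ι) : ℝ :=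
  w j * (‖y - a j‖ ^ 2 + ε) ^ (p / 2 - 1)

variable [Fintype ι]

/-- The objective `Φ` minimized by IRLS: the weighted sum of `p`-th powers of distances to the
points `a j`, smoothed by adding `ε` to the squared distances. -/
noncomputable def irlsObjective (a : ι → E) (w : ι → ℝ) (ε p : ℝ) (x : E) : ℝ :=
  ∑ j, w j * (‖x - a j‖ ^ 2 + ε) ^ (p / 2)

theorem sum_irlsWeight_pos [Nonempty ι] {a : ι → E} {w : ι → ℝ} {ε : ℝ} (p : ℝ) {y : E}
    (hw : ∀ j, 0 < w j) (hy : ∀ j, 0 < ‖y - a j‖ ^ 2 + ε) :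
    0 < ∑ j, irlsWeight a w ε p y j :=
  Finset.sum_pos (fun j _ => mul_pos (hw j) (Real.rpow_pos_of_pos (hy j) _))
    Finset.univ_nonempty

variable [InnerProductSpace ℝ E]

/-- The IRLS update `T(y)`: the mean of the points `a j` for the weights at the iterate `y`. -/
noncomputable def irlsUpdate (a : ι → E) (w : ι → ℝ) (ε p : ℝ) (y : E) : E :=
  Finset.univ.centerMass (irlsWeight a w ε p y) a

variable [CompleteSpace E] {a : ι → E} {w : ι → ℝ} {ε p : ℝ} {y : E}

theorem hasGradientAt_irlsObjective (hy : ∀ j, ‖y - a j‖ ^ 2 + ε ≠ 0 ∨ 1 ≤ p / 2) :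
    HasGradientAt (irlsObjective a w ε p) (p • ∑ j, irlsWeight a w ε p y j • (y - a j)) y := by
  have hsum : p • ∑ j, irlsWeight a w ε p y j • (y - a j) =
      ∑ j, w j • (2 * (p / 2) * (‖y - a j‖ ^ 2 + ε) ^ (p / 2 - 1)) • (y - a j) := by
    simp only [irlsWeight, Finset.smul_sum, smul_smul, mul_div_cancel₀ p two_ne_zero,
      mul_left_comm p]
  rw [hsum]
  exact hasGradientAt_sum_const_mul w fun j _ => hasGradientAt_norm_sub_sq_add_rpow (hy j)

theorem gradientStep_irlsObjective (hp : p ≠ 0) (hμ : ∑ j, irlsWeight a w ε p y j ≠ 0)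
    (hy : ∀ j, ‖y - a j‖ ^ 2 + ε ≠ 0 ∨ 1 ≤ p / 2) :
    gradientStep (irlsObjective a w ε p) (p / 2 * ∑ j, irlsWeight a w ε p y j) y =
      irlsUpdate a w ε p y := by
  rw [gradientStep, (hasGradientAt_irlsObjective hy).gradient,
    sum_smul_sub_eq_sum_smul_sub_centerMass _ hμ, smul_smul p, ← mul_assoc,
    mul_div_cancel₀ p two_ne_zero, inv_smul_smul₀ (mul_ne_zero hp hμ), sub_sub_cancel, irlsUpdate]

theorem stmt_8_general (hp : 0 < p) (hμ : 0 < ∑ j, irlsWeight a w ε p y j)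
    (hy : ∀ j, 0 < ‖y - a j‖ ^ 2 + ε) {z : E} (hz : z ≠ irlsUpdate a w ε p y) :
    quadraticModel (irlsObjective a w ε p) (p / 2 * ∑ j, irlsWeight a w ε p y j) y
        (irlsUpdate a w ε p y) <
      quadraticModel (irlsObjective a w ε p) (p / 2 * ∑ j, irlsWeight a w ε p y j) y z := by
  have hstep := gradientStep_irlsObjective hp.ne' hμ.ne' fun j => Or.inl (hy j).ne'
  rw [← hstep] at hz ⊢
  exact quadraticModel_gradientStep_lt _ (mul_pos (half_pos hp) hμ) hz

end IRLS

theorem stmt_8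
    (d n : ℕ) (hd : 1 ≤ d) (hn : 1 ≤ n)
    (a : Fin n → EuclideanSpace ℝ (Fin d))
    (w : Fin n → ℝ) (hw : ∀ j, 0 < w j)
    (ε : ℝ) (hε : 0 < ε)
    (p : ℝ) (hp0 : 0 < p) (hp2 : p ≤ 2)
    (Φ : EuclideanSpace ℝ (Fin d) → ℝ)
    (hΦ : ∀ x, Φ x = ∑ j, w j * (‖x - a j‖ ^ 2 + ε) ^ (p / 2)) :
    ∀ y : EuclideanSpace ℝ (Fin d),
      ∀ z, z ≠ (∑ j, w j * (‖y - a j‖ ^ 2 + ε) ^ (p / 2 - 1))⁻¹ •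
            ∑ j, (w j * (‖y - a j‖ ^ 2 + ε) ^ (p / 2 - 1)) • a j →
        (fun v => Φ y + ⟪v - y, gradient Φ y⟫ +
            p / 2 * (∑ j, w j * (‖y - a j‖ ^ 2 + ε) ^ (p / 2 - 1)) * ‖v - y‖ ^ 2)
          ((∑ j, w j * (‖y - a j‖ ^ 2 + ε) ^ (p / 2 - 1))⁻¹ •
            ∑ j, (w j * (‖y - a j‖ ^ 2 + ε) ^ (p / 2 - 1)) • a j) <
        Φ y + ⟪z - y, gradient Φ y⟫ +
            p / 2 * (∑ j, w j * (‖y - a j‖ ^ 2 + ε) ^ (p / 2 - 1)) * ‖z - y‖ ^ 2 := by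
  obtain rfl : Φ = irlsObjective a w ε p := funext hΦ
  have : Nonempty (Fin n) := Fin.pos_iff_nonempty.mp hn
  have hbase (y) (j) : 0 < ‖y - a j‖ ^ 2 + ε := by positivity
  exact fun y _ hz => stmt_8_general hp0 (sum_irlsWeight_pos p hw (hbase y)) (hbase y) hz
end

section
/- Suppose 0 < p < 1, the IRLS iterates (x^{(t)}) converge to a local minimizer x* of Φ, and the Hessian Φ''(x*) is positive definite. Then (Φ(x^{(t)})) converges linearly to Φ(x*): there exist ν < 1 and T ≥ 0 such that for all t ≥ T, Φ(x^{(t+1)}) − Φ(x*) ≤ ν (Φ(x^{(t)}) − Φ(x*)). -/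
open scoped ContDiff RealInnerProductSpace
open Filter

/-!
One IRLS step replaces the objective by the quadratic obtained from the tangent lines of the concave
power `s ↦ s ^ (p / 2)` and jumps to the minimizer of that quadratic, the weighted mean of the
anchors. It is therefore a gradient step, and it lowers the objective by at least a fixed multiple
of the squared norm of the gradient. Near a critical point with nondegenerate Hessian the distance
to that point is `O(‖∇Φ‖)` and the excess of `Φ` is quadratic in the distance, so that the excess is
`O(‖∇Φ‖²)` (a Polyak–Łojasiewicz inequality): each step removes a fixed proportion of it.
-/

section CriticalPoint

open Topology

variable {E F : Type*} [NormedAddCommGroup E] [NormedSpace ℝ E] [NormedAddCommGroup F]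
  [NormedSpace ℝ F] {f : E → F} {x₀ : E}

theorem isBigO_sub_norm_sub_sq_of_fderiv_eq_zero (hf : ∀ᶠ x in 𝓝 x₀, DifferentiableAt ℝ f x)
    (hf' : DifferentiableAt ℝ (fderiv ℝ f) x₀) (hcrit : fderiv ℝ f x₀ = 0) :
    (fun x ↦ f x - f x₀) =O[𝓝 x₀] fun x ↦ ‖x - x₀‖ ^ 2 := by
  obtain ⟨C, hC, hbound⟩ := hf'.hasFDerivAt.isBigO_sub.exists_pos
  obtain ⟨r, hr, hball⟩ := Metric.eventually_nhds_iff_ball.1 (hf.and hbound.bound)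
  refine .of_bound C (eventually_of_mem (Metric.ball_mem_nhds x₀ hr) fun x hx ↦ ?_)
  have hsub : Metric.closedBall x₀ ‖x - x₀‖ ⊆ Metric.ball x₀ r :=
    Metric.closedBall_subset_ball (mem_ball_iff_norm.1 hx)
  have hfderiv : ∀ y ∈ Metric.closedBall x₀ ‖x - x₀‖, ‖fderiv ℝ f y‖ ≤ C * ‖x - x₀‖ := by
    intro y hy
    calc ‖fderiv ℝ f y‖ ≤ C * ‖y - x₀‖ := by simpa [hcrit] using (hball y (hsub hy)).2
      _ ≤ C * ‖x - x₀‖ := by gcongr; exact mem_closedBall_iff_norm.1 hy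
  calc ‖f x - f x₀‖ ≤ C * ‖x - x₀‖ * ‖x - x₀‖ :=
        (convex_closedBall x₀ _).norm_image_sub_le_of_norm_fderiv_le
          (fun y hy ↦ (hball y (hsub hy)).1) hfderiv
          (Metric.mem_closedBall_self (norm_nonneg _)) (mem_closedBall_iff_norm.2 le_rfl)
    _ = C * ‖‖x - x₀‖ ^ 2‖ := by rw [norm_pow, norm_norm]; ring

/-- For an operator, `IsInducing` means bounded below, which is injectivity in finite dimension. -/
theorem isBigO_sub_norm_fderiv_sq_of_fderiv_eq_zero (hf : ∀ᶠ x in 𝓝 x₀, DifferentiableAt ℝ f x)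
    (hf' : DifferentiableAt ℝ (fderiv ℝ f) x₀) (hcrit : fderiv ℝ f x₀ = 0)
    (hHess : IsInducing (fderiv ℝ (fderiv ℝ f) x₀)) :
    (fun x ↦ f x - f x₀) =O[𝓝 x₀] fun x ↦ ‖fderiv ℝ f x‖ ^ 2 := by
  have hdist : (fun x ↦ x - x₀) =O[𝓝 x₀] fderiv ℝ f := by
    simpa only [hcrit, sub_zero] using (hf'.hasFDerivAt.isTheta_sub hHess).isBigO_symm
  exact (isBigO_sub_norm_sub_sq_of_fderiv_eq_zero hf hf' hcrit).trans (hdist.norm_norm.pow 2)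

theorem isInducing_of_forall_apply_self_pos [FiniteDimensional ℝ E] {B : E →L[ℝ] E →L[ℝ] ℝ}
    (hB : ∀ u, u ≠ 0 → 0 < B u u) : IsInducing B := by
  refine (LinearMap.isClosedEmbedding_of_injective (f := (B : E →ₗ[ℝ] E →L[ℝ] ℝ))
    (LinearMap.ker_eq_bot'.2 fun u hu ↦ ?_)).isInducing
  by_contra hne
  simpa [show B u = 0 from hu] using hB u hne

end CriticalPoint

section Descent

open Topology

variable {E : Type*} [NormedAddCommGroup E] [NormedSpace ℝ E] {f : E → ℝ} {x : ℕ → E} {x₀ : E}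
  {κ : ℝ}

theorem fderiv_eq_zero_of_sufficient_decrease (hf : ContinuousAt f x₀)
    (hf' : ContinuousAt (fderiv ℝ f) x₀) (hκ : 0 < κ) (hx : Tendsto x atTop (𝓝 x₀))
    (hdec : ∀ t, f (x (t + 1)) ≤ f (x t) - κ * ‖fderiv ℝ f (x t)‖ ^ 2) :
    fderiv ℝ f x₀ = 0 := by
  have hfx : Tendsto (fun t ↦ f (x t)) atTop (𝓝 (f x₀)) := hf.tendsto.comp hx
  have hfderiv : Tendsto (fun t ↦ fderiv ℝ f (x t)) atTop (𝓝 (fderiv ℝ f x₀)) := hf'.tendsto.comp hx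
  have hlim : f x₀ ≤ f x₀ - κ * ‖fderiv ℝ f x₀‖ ^ 2 :=
    le_of_tendsto_of_tendsto' (hfx.comp (tendsto_add_atTop_nat 1))
      (hfx.sub ((hfderiv.norm.pow 2).const_mul κ)) hdec
  have hsq : ‖fderiv ℝ f x₀‖ ^ 2 ≤ 0 := nonpos_of_mul_nonpos_right (by linarith) hκ
  simpa using hsq.antisymm (sq_nonneg _)

theorem exists_eventually_sub_le_mul_sub_of_sufficient_decrease
    (hf : ∀ᶠ x in 𝓝 x₀, DifferentiableAt ℝ f x) (hf' : DifferentiableAt ℝ (fderiv ℝ f) x₀)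
    (hHess : IsInducing (fderiv ℝ (fderiv ℝ f) x₀)) (hκ : 0 < κ) (hx : Tendsto x atTop (𝓝 x₀))
    (hdec : ∀ t, f (x (t + 1)) ≤ f (x t) - κ * ‖fderiv ℝ f (x t)‖ ^ 2) :
    ∃ ν < (1 : ℝ), ∀ᶠ t in atTop, f (x (t + 1)) - f x₀ ≤ ν * (f (x t) - f x₀) := by
  have hcrit : fderiv ℝ f x₀ = 0 :=
    fderiv_eq_zero_of_sufficient_decrease hf.self_of_nhds.continuousAt hf'.continuousAt hκ hx hdec
  obtain ⟨C, hC, hPL⟩ := (isBigO_sub_norm_fderiv_sq_of_fderiv_eq_zero hf hf' hcrit hHess).exists_pos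
  refine ⟨1 - κ / C, sub_lt_self _ (by positivity), (hx.eventually hPL.bound).mono fun t ht ↦ ?_⟩
  have hexcess : f (x t) - f x₀ ≤ C * ‖fderiv ℝ f (x t)‖ ^ 2 := by
    simpa using (le_abs_self _).trans ht
  have hgain : κ / C * (f (x t) - f x₀) ≤ κ * ‖fderiv ℝ f (x t)‖ ^ 2 :=
    calc κ / C * (f (x t) - f x₀) ≤ κ / C * (C * ‖fderiv ℝ f (x t)‖ ^ 2) := by gcongr
      _ = κ * ‖fderiv ℝ f (x t)‖ ^ 2 := by field_simp
  linarith [hdec t]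

end Descent

section WeightedMean

variable {E ι : Type*} {s : Finset ι} {μ : ι → ℝ}

theorem sum_smul_sub_eq_smul_sub_centerMass [AddCommGroup E] [Module ℝ E] (hμ : ∑ i ∈ s, μ i ≠ 0)
    (z : ι → E) (y : E) :
    ∑ i ∈ s, μ i • (y - z i) = (∑ i ∈ s, μ i) • (y - s.centerMass μ z) := by
  simp only [Finset.centerMass, smul_sub, smul_inv_smul₀ hμ, Finset.sum_sub_distrib,
    Finset.sum_smul]

theorem sum_mul_norm_sub_sq_eq_add_centerMass [NormedAddCommGroup E] [InnerProductSpace ℝ E]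
    (hμ : ∑ i ∈ s, μ i ≠ 0) (z : ι → E) (y : E) :
    ∑ i ∈ s, μ i * ‖y - z i‖ ^ 2 = ∑ i ∈ s, μ i * ‖s.centerMass μ z - z i‖ ^ 2
      + (∑ i ∈ s, μ i) * ‖y - s.centerMass μ z‖ ^ 2 := by
  set c := s.centerMass μ z
  have hcross : ∑ i ∈ s, μ i * ⟪y - c, c - z i⟫ = 0 := by
    simp_rw [← real_inner_smul_right, ← inner_sum]
    rw [sum_smul_sub_eq_smul_sub_centerMass hμ, sub_self, smul_zero, inner_zero_right]
  calc ∑ i ∈ s, μ i * ‖y - z i‖ ^ 2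
      = ∑ i ∈ s, (μ i * ‖c - z i‖ ^ 2 + μ i * ‖y - c‖ ^ 2 + 2 * (μ i * ⟪y - c, c - z i⟫)) := by
        refine Finset.sum_congr rfl fun i _ ↦ ?_
        rw [← sub_add_sub_cancel y c (z i), norm_add_sq_real]
        ring
    _ = _ := by
        rw [Finset.sum_add_distrib, Finset.sum_add_distrib, ← Finset.mul_sum, hcross, mul_zero,
          add_zero, ← Finset.sum_mul]

end WeightedMean

theorem rpow_le_rpow_add_mul_sub {q r s : ℝ} (hq0 : 0 ≤ q) (hq1 : q ≤ 1) (hr : 0 < r)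
    (hs : 0 ≤ s) : s ^ q ≤ r ^ q + q * r ^ (q - 1) * (s - r) := by
  have hb : (1 + (s / r - 1)) ^ q ≤ 1 + q * (s / r - 1) :=
    rpow_one_add_le_one_add_mul_self (by linarith [div_nonneg hs hr.le]) hq0 hq1
  rw [add_sub_cancel, Real.div_rpow hs hr.le, div_le_iff₀ (Real.rpow_pos_of_pos hr q)] at hb
  rw [Real.rpow_sub_one hr.ne']
  calc s ^ q ≤ (1 + q * (s / r - 1)) * r ^ q := hb
    _ = r ^ q + q * (r ^ q / r) * (s - r) := by field_simp

namespace IRLS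

section Normed

variable {E ι : Type*} [NormedAddCommGroup E] {a : ι → E} {w : ι → ℝ} {ε p : ℝ}

/-- The weight `μ_j` that an IRLS step from `x` gives to the anchor `a j`. -/
noncomputable def weight (a : ι → E) (w : ι → ℝ) (ε p : ℝ) (x : E) (j : ι) : ℝ :=
  w j * (‖x - a j‖ ^ 2 + ε) ^ (p / 2 - 1)

variable [Fintype ι]

/-- The objective `Φ`: the weighted sum of the `p`-th powers of the distances to the anchors,
smoothed by `ε`. -/
noncomputable def objective (a : ι → E) (w : ι → ℝ) (ε p : ℝ) (x : E) : ℝ :=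
  ∑ j, w j * (‖x - a j‖ ^ 2 + ε) ^ (p / 2)

/-- The IRLS iteration map: `x` is sent to the mean of the anchors for the weights at `x`. -/
noncomputable def step [NormedSpace ℝ E] (a : ι → E) (w : ι → ℝ) (ε p : ℝ) (x : E) : E :=
  Finset.univ.centerMass (weight a w ε p x) a

theorem sum_weight_pos (hw : 0 < w) (hε : 0 < ε) (x : E) : 0 < ∑ j, weight a w ε p x j := by
  obtain ⟨hw0, i, hi⟩ := Pi.lt_def.1 hw
  exact Finset.sum_pos' (fun j _ ↦ mul_nonneg (hw0 j) (by positivity))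
    ⟨i, Finset.mem_univ i, mul_pos hi (by positivity)⟩

theorem sum_weight_le (hw : 0 ≤ w) (hε : 0 < ε) (hp : p ≤ 2) (x : E) :
    ∑ j, weight a w ε p x j ≤ (∑ j, w j) * ε ^ (p / 2 - 1) := by
  rw [Finset.sum_mul]
  exact Finset.sum_le_sum fun j _ ↦ mul_le_mul_of_nonneg_left
    (Real.rpow_le_rpow_of_nonpos hε (le_add_of_nonneg_left (sq_nonneg _)) (by linarith)) (hw j)

theorem objective_le_add_sum_weight_mul (hw : 0 ≤ w) (hε : 0 < ε) (hp0 : 0 ≤ p) (hp2 : p ≤ 2)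
    (x y : E) :
    objective a w ε p y ≤ objective a w ε p x
      + p / 2 * (∑ j, weight a w ε p x j * ‖y - a j‖ ^ 2
        - ∑ j, weight a w ε p x j * ‖x - a j‖ ^ 2) := by
  rw [objective, objective, ← Finset.sum_sub_distrib, Finset.mul_sum, ← Finset.sum_add_distrib]
  refine Finset.sum_le_sum fun j _ ↦ ?_
  have htangent := rpow_le_rpow_add_mul_sub (q := p / 2) (r := ‖x - a j‖ ^ 2 + ε)
    (s := ‖y - a j‖ ^ 2 + ε) (by linarith) (by linarith) (by positivity) (by positivity)
  refine (mul_le_mul_of_nonneg_left htangent (hw j)).trans_eq ?_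
  rw [weight]
  ring

end Normed

variable {E ι : Type*} [NormedAddCommGroup E] [InnerProductSpace ℝ E] [Fintype ι] {a : ι → E}
  {w : ι → ℝ} {ε p : ℝ}

theorem contDiff_objective {k : ℕ∞ω} (hε : 0 < ε) : ContDiff ℝ k (objective a w ε p) :=
  ContDiff.sum fun j _ ↦ contDiff_const.mul <|
    (((contDiff_id.sub contDiff_const).norm_sq ℝ).add contDiff_const).rpow_const_of_ne
      fun x ↦ by positivity

theorem hasFDerivAt_objective (hw : 0 < w) (hε : 0 < ε) (x : E) :
    HasFDerivAt (objective a w ε p)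
      ((p * ∑ j, weight a w ε p x j) • innerSL ℝ (x - step a w ε p x)) x := by
  have hterm (j : ι) : HasFDerivAt (fun y ↦ w j * (‖y - a j‖ ^ 2 + ε) ^ (p / 2))
      (p • innerSL ℝ (weight a w ε p x j • (x - a j))) x := by
    refine (((((hasFDerivAt_id x).sub_const (a j)).norm_sq.add_const ε).rpow_const (p := p / 2)
      (Or.inl (by positivity))).const_mul (w j)).congr_fderiv ?_
    ext v
    simp only [id_eq, map_sub, ContinuousLinearMap.comp_id, smul_apply, sub_apply,
      coe_innerSL_apply, nsmul_eq_mul, Nat.cast_ofNat, smul_eq_mul, weight, map_smul]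
    ring
  refine (HasFDerivAt.fun_sum fun j _ ↦ hterm j).congr_fderiv ?_
  rw [← Finset.smul_sum, ← map_sum,
    sum_smul_sub_eq_smul_sub_centerMass (sum_weight_pos hw hε x).ne', map_smul, smul_smul, step]

theorem objective_step_le (hw : 0 < w) (hε : 0 < ε) (hp0 : 0 ≤ p) (hp2 : p ≤ 2) (x : E) :
    objective a w ε p (step a w ε p x) ≤ objective a w ε p x
      - p / 2 * (∑ j, weight a w ε p x j) * ‖x - step a w ε p x‖ ^ 2 := by
  refine (objective_le_add_sum_weight_mul hw.le hε hp0 hp2 x _).trans_eq ?_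
  rw [sum_mul_norm_sub_sq_eq_add_centerMass (sum_weight_pos hw hε x).ne' a x, step]
  ring

theorem objective_step_le_sub_norm_fderiv_sq (hw : 0 < w) (hε : 0 < ε) (hp0 : 0 < p) (hp2 : p ≤ 2)
    (x : E) :
    objective a w ε p (step a w ε p x) ≤ objective a w ε p x
      - (2 * p * ((∑ j, w j) * ε ^ (p / 2 - 1)))⁻¹ * ‖fderiv ℝ (objective a w ε p) x‖ ^ 2 := by
  have hM : 0 < ∑ j, weight a w ε p x j := sum_weight_pos hw hε x
  have hnorm : ‖fderiv ℝ (objective a w ε p) x‖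
      = p * (∑ j, weight a w ε p x j) * ‖x - step a w ε p x‖ := by
    rw [(hasFDerivAt_objective hw hε x).fderiv, norm_smul, innerSL_apply_norm,
      Real.norm_of_nonneg (by positivity)]
  have hgain : (2 * p * ((∑ j, w j) * ε ^ (p / 2 - 1)))⁻¹ * ‖fderiv ℝ (objective a w ε p) x‖ ^ 2
      ≤ p / 2 * (∑ j, weight a w ε p x j) * ‖x - step a w ε p x‖ ^ 2 :=
    calc _ ≤ (2 * p * ∑ j, weight a w ε p x j)⁻¹ * ‖fderiv ℝ (objective a w ε p) x‖ ^ 2 := by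
          gcongr
          exact sum_weight_le hw.le hε hp2 x
      _ = _ := by
          rw [hnorm]
          field_simp
  linarith [objective_step_le (a := a) hw hε hp0.le hp2 x]

end IRLS

theorem stmt_19_general {E ι : Type*} [NormedAddCommGroup E] [InnerProductSpace ℝ E] [Fintype ι]
    {a : ι → E} {w : ι → ℝ} (hw : 0 < w) {ε : ℝ} (hε : 0 < ε) {p : ℝ} (hp0 : 0 < p) (hp2 : p ≤ 2)
    {x : ℕ → E} (hx : ∀ t, x (t + 1) = IRLS.step a w ε p (x t)) {xstar : E}
    (hconv : Tendsto x atTop (nhds xstar))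
    (hHess : Topology.IsInducing (fderiv ℝ (fderiv ℝ (IRLS.objective a w ε p)) xstar)) :
    ∃ ν < (1 : ℝ), ∃ T : ℕ, ∀ t ≥ T,
      IRLS.objective a w ε p (x (t + 1)) - IRLS.objective a w ε p xstar
        ≤ ν * (IRLS.objective a w ε p (x t) - IRLS.objective a w ε p xstar) := by
  have hw_sum : 0 < ∑ j, w j := Fintype.sum_pos hw
  have hdec (t : ℕ) := IRLS.objective_step_le_sub_norm_fderiv_sq (a := a) hw hε hp0 hp2 (x t)
  simp only [← hx] at hdec
  have hfderiv : ContDiff ℝ 1 (fderiv ℝ (IRLS.objective a w ε p)) :=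
    (IRLS.contDiff_objective hε).fderiv_right one_add_one_eq_two.le
  simpa only [eventually_atTop] using exists_eventually_sub_le_mul_sub_of_sufficient_decrease
    (.of_forall fun y ↦ (IRLS.hasFDerivAt_objective hw hε y).differentiableAt)
    (hfderiv.differentiable one_ne_zero xstar) hHess (by positivity) hconv hdec

theorem stmt_19
    (d n : ℕ) (hd : 1 ≤ d) (hn : 1 ≤ n)
    (a : Fin n → EuclideanSpace ℝ (Fin d))
    (w : Fin n → ℝ) (hw : ∀ j, 0 < w j)
    (ε : ℝ) (hε : 0 < ε)
    (p : ℝ) (hp0 : 0 < p) (hp1 : p < 1)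
    (Φ : EuclideanSpace ℝ (Fin d) → ℝ)
    (hΦ : ∀ x, Φ x = ∑ j, w j * (‖x - a j‖ ^ 2 + ε) ^ (p / 2))
    (x : ℕ → EuclideanSpace ℝ (Fin d))
    (hx : ∀ t, x (t + 1) =
      (∑ j, w j * (‖x t - a j‖ ^ 2 + ε) ^ (p / 2 - 1))⁻¹ •
        ∑ j, (w j * (‖x t - a j‖ ^ 2 + ε) ^ (p / 2 - 1)) • a j)
    (xstar : EuclideanSpace ℝ (Fin d))
    (hconv : Tendsto x atTop (nhds xstar))
    (hlocmin : IsLocalMin Φ xstar)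
    (hposdef : ∀ u : EuclideanSpace ℝ (Fin d), u ≠ 0 →
      0 < fderiv ℝ (fderiv ℝ Φ) xstar u u) :
    ∃ ν < (1 : ℝ), ∃ T : ℕ, ∀ t ≥ T,
      Φ (x (t + 1)) - Φ xstar ≤ ν * (Φ (x t) - Φ xstar) := by
  obtain rfl : Φ = IRLS.objective a w ε p := funext hΦ
  exact stmt_19_general (Pi.lt_def.2 ⟨fun j ↦ (hw j).le, ⟨0, hn⟩, hw _⟩) hε hp0 (by linarith) hx
    hconv (isInducing_of_forall_apply_self_pos hposdef)
end
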